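/- Let f : [a, b] → ℝ be a continuous piecewise quadratic function with n pieces such that at every point the left derivative of f is greater than or equal to the right derivative. Let D be the number of distinct pairs (α, β) among the leading coefficient pairs of the quadratic pieces α x² + β x + γ of f. Then the cumulative minimum g(t) = min_{s ∈ [a,t]} f(s) is a continuous piecewise quadratic function with at most n + D + 1 pieces. -/

import Mathlib

open Set

/-- `f` is piecewise quadratic on `[a,b]` with at most `k` pieces. -/
def PiecewiseQuadraticOn (f : ℝ → ℝ) (a b : ℝ) (k : ℕ) : Prop :=
  ∃ t : Fin (k + 1) → ℝ, Monotone t ∧ t 0 = a ∧ t (Fin.last k) = b ∧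
    ∀ i : Fin k, ∃ c d e : ℝ,
      ∀ x ∈ Set.Icc (t i.castSucc) (t i.succ), f x = c * x ^ 2 + d * x + e

namespace PiecewiseQuadraticOn

variable {g : ℝ → ℝ} {a s u : ℝ} {p q : ℕ}

theorem refl (g : ℝ → ℝ) (a : ℝ) : PiecewiseQuadraticOn g a a 0 :=
  ⟨fun _ => a, monotone_const, rfl, rfl, fun i => i.elim0⟩

theorem append (h : PiecewiseQuadraticOn g a s p) (hsu : s ≤ u) (c d e : ℝ)
    (hq : ∀ x ∈ Icc s u, g x = c * x ^ 2 + d * x + e) :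
    PiecewiseQuadraticOn g a u (p + 1) := by
  obtain ⟨t, ht, h0, hl, hp⟩ := h
  refine ⟨Fin.snoc (α := fun _ => ℝ) t u, ?_, ?_, ?_, ?_⟩
  · refine Fin.monotone_iff_le_succ.2 fun i => ?_
    induction i using Fin.lastCases with
    | last => simpa [Fin.succ_last, hl] using hsu
    | cast i =>
      rw [← Fin.castSucc_succ, Fin.snoc_castSucc, Fin.snoc_castSucc]
      exact ht i.castSucc_lt_succ.le
  · rw [← Fin.castSucc_zero, Fin.snoc_castSucc, h0]
  · simp
  · intro i
    induction i using Fin.lastCases with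
    | last => exact ⟨c, d, e, by simpa [Fin.succ_last, hl] using hq⟩
    | cast i =>
      rw [← Fin.castSucc_succ, Fin.snoc_castSucc, Fin.snoc_castSucc]
      exact hp i

theorem append_const (h : PiecewiseQuadraticOn g a s p) (hsu : s ≤ u) (m : ℝ)
    (hm : ∀ x ∈ Icc s u, g x = m) : PiecewiseQuadraticOn g a u (p + 1) :=
  h.append hsu 0 0 m fun x hx => by rw [hm x hx]; ring

theorem mono (h : PiecewiseQuadraticOn g a s p) (hpq : p ≤ q) :
    PiecewiseQuadraticOn g a s q := by
  induction hpq with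
  | refl => exact h
  | step _ ih =>
    exact ih.append_const le_rfl (g s) fun x hx => by rw [le_antisymm hx.2 hx.1]

end PiecewiseQuadraticOn

/-- A continuous function that drops below `m` has a last crossing of the level `m`. -/
theorem exists_last_crossing {f : ℝ → ℝ} {l r m : ℝ} (hlr : l ≤ r)
    (hf : ContinuousOn f (Icc l r)) (hl : m ≤ f l) (hr : f r < m) :
    ∃ y ∈ Ico l r, f y = m ∧ ∀ x ∈ Ioc y r, f x < m := by
  have hcomp : IsCompact (Icc l r ∩ f ⁻¹' Ici m) :=
    isCompact_Icc.of_isClosed_subset (hf.preimage_isClosed_of_isClosed isClosed_Icc isClosed_Ici)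
      inter_subset_left
  obtain ⟨y, ⟨hy, hmy⟩, hub⟩ := hcomp.exists_isGreatest ⟨l, left_mem_Icc.2 hlr, hl⟩
  have hmy : m ≤ f y := hmy
  obtain ⟨z, hz, hfz⟩ := intermediate_value_Icc' hy.2 (hf.mono (Icc_subset_Icc_left hy.1))
    ⟨hr.le, hmy⟩
  have hzy : z = y := le_antisymm (hub ⟨⟨hy.1.trans hz.1, hz.2⟩, hfz.ge⟩) hz.1
  refine ⟨y, ⟨hy.1, lt_of_le_of_ne hy.2 ?_⟩, hzy ▸ hfz, fun x hx => ?_⟩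
  · rintro rfl
    exact hr.not_ge hmy
  · by_contra! hmx
    exact (hub ⟨⟨hy.1.trans hx.1.le, hx.2⟩, hmx⟩).not_gt hx.1

theorem exists_quadratic_descent {f : ℝ → ℝ} {l r m A B C : ℝ}
    (hf : ∀ x ∈ Icc l r, f x = A * x ^ 2 + B * x + C) (hl : m ≤ f l)
    (hr : ∃ x ∈ Icc l r, f x < m) :
    ∃ y ∈ Icc l r, f y = m ∧ 2 * A * y + B ≤ 0 ∧ ∀ x ∈ Icc l y, m ≤ f x := by
  obtain ⟨w, hw, hwm⟩ := hr
  have hcont : ContinuousOn f (Icc l w) :=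
    ContinuousOn.congr (f := fun x => A * x ^ 2 + B * x + C) (by fun_prop)
      fun x hx => hf x ⟨hx.1, hx.2.trans hw.2⟩
  obtain ⟨y, hy, hym, hlt⟩ := exists_last_crossing hw.1 hcont hl hwm
  have hyI : y ∈ Icc l r := ⟨hy.1, hy.2.le.trans hw.2⟩
  have hdiff : ∀ x ∈ Icc l r, f x = m + (x - y) * (A * (x + y) + B) := fun x hx => by
    rw [← hym, hf x hx, hf y hyI]; ring
  have hslope : A * (w + y) + B < 0 := by
    have := hdiff w hw
    by_contra! h
    have := mul_nonneg (sub_nonneg.2 hy.2.le) h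
    linarith
  have hder : 2 * A * y + B ≤ 0 := by
    rcases le_or_gt 0 A with hA | hA
    · nlinarith [mul_nonneg hA (sub_nonneg.2 hy.2.le)]
    · by_contra! h
      have hroot : A * (-B / A - y + y) + B = 0 := by have := hA.ne; field_simp; ring
      have hyz : y < -B / A - y := by
        rw [lt_sub_iff_add_lt, lt_div_iff_of_neg hA]; linarith
      have hzw : -B / A - y ≤ w := by
        rw [sub_le_iff_le_add, div_le_iff_of_neg hA]; linarith
      have := hlt _ ⟨hyz, hzw⟩
      rw [hdiff _ ⟨hy.1.trans hyz.le, hzw.trans hw.2⟩, hroot] at this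
      simp at this
  refine ⟨y, hyI, hym, hder, fun x hx => ?_⟩
  rw [hdiff x ⟨hx.1, hx.2.trans hyI.2⟩]
  have hslope_x : x = y ∨ A * (x + y) + B ≤ 0 := by
    rcases le_or_gt 0 A with hA | hA
    · right; nlinarith [mul_nonneg hA (sub_nonneg.2 hx.2)]
    · rcases hx.2.eq_or_lt with h | h
      · exact .inl h
      · right
        have h1 := hdiff l ⟨le_rfl, hy.1.trans hyI.2⟩
        have hly : 0 < y - l := by linarith [hx.1]
        have h2 : A * (l + y) + B ≤ 0 := by
          by_contra! h3
          have := mul_pos hly h3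
          linarith
        nlinarith [mul_nonneg (neg_nonneg.2 hA.le) (sub_nonneg.2 hx.1)]
  rcases hslope_x with rfl | h
  · simp
  · nlinarith [mul_nonneg (sub_nonneg.2 hx.2) (neg_nonneg.2 h)]

theorem antitoneOn_quadratic {f : ℝ → ℝ} {l r A B C : ℝ}
    (hf : ∀ x ∈ Icc l r, f x = A * x ^ 2 + B * x + C)
    (hl : 2 * A * l + B ≤ 0) (hr : 2 * A * r + B ≤ 0) : AntitoneOn f (Icc l r) := by
  intro x hx y hy hxy
  have h : A * (x + y) + B ≤ 0 := by
    rcases le_or_gt 0 A with hA | hA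
    · nlinarith [mul_nonneg hA (sub_nonneg.2 hx.2), mul_nonneg hA (sub_nonneg.2 hy.2)]
    · nlinarith [mul_nonneg (neg_nonneg.2 hA.le) (sub_nonneg.2 hx.1),
        mul_nonneg (neg_nonneg.2 hA.le) (sub_nonneg.2 hy.1)]
  rw [hf x hx, hf y hy]
  nlinarith [mul_nonneg (sub_nonneg.2 hxy) (neg_nonneg.2 h)]

theorem hasDerivAt_quadratic (A B C x : ℝ) :
    HasDerivAt (fun x : ℝ => A * x ^ 2 + B * x + C) (2 * A * x + B) x := by
  refine ((((hasDerivAt_pow 2 x).const_mul A).add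
    ((hasDerivAt_id' x).const_mul B)).add_const C).congr_deriv ?_
  push_cast
  ring

/-- `g` is the cumulative minimum of `f` on `[a,b]`. -/
def IsCumulativeMin (f g : ℝ → ℝ) (a b : ℝ) : Prop :=
  ∀ u ∈ Icc a b, IsLeast (f '' Icc a u) (g u)

namespace IsCumulativeMin

variable {f g : ℝ → ℝ} {a b s u : ℝ}

theorem of_continuousOn (hf : ContinuousOn f (Icc a b)) :
    IsCumulativeMin f (fun u => sInf (f '' Icc a u)) a b := fun _ hu =>
  (isCompact_Icc.image_of_continuousOn (hf.mono (Icc_subset_Icc_right hu.2))).isLeast_sInf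
    ((nonempty_Icc.2 hu.1).image f)

theorem le (hg : IsCumulativeMin f g a b) (hu : u ∈ Icc a b) {x : ℝ} (hx : x ∈ Icc a u) :
    g u ≤ f x :=
  (hg u hu).2 (mem_image_of_mem f hx)

theorem eq_of_le (hg : IsCumulativeMin f g a b) (has : a ≤ s) (hsu : s ≤ u) (hub : u ≤ b)
    (h : ∀ x ∈ Icc s u, g s ≤ f x) : g u = g s := by
  refine (hg u ⟨has.trans hsu, hub⟩).unique ⟨image_mono (Icc_subset_Icc_right hsu)
    (hg s ⟨has, hsu.trans hub⟩).1, ?_⟩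
  rintro _ ⟨x, hx, rfl⟩
  rcases le_total x s with hxs | hxs
  · exact hg.le ⟨has, hsu.trans hub⟩ ⟨hx.1, hxs⟩
  · exact h x ⟨hxs, hx.2⟩

theorem eq_self_of_antitoneOn (hg : IsCumulativeMin f g a b) (has : a ≤ s) (hsu : s ≤ u)
    (hub : u ≤ b) (hs : g s = f s) (h : AntitoneOn f (Icc s u)) : g u = f u := by
  refine (hg u ⟨has.trans hsu, hub⟩).unique
    ⟨mem_image_of_mem f ⟨has.trans hsu, le_rfl⟩, ?_⟩
  rintro _ ⟨x, hx, rfl⟩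
  rcases le_total x s with hxs | hxs
  · exact (h ⟨le_rfl, hsu⟩ ⟨hsu, le_rfl⟩ hsu).trans
      (hs ▸ hg.le ⟨has, hsu.trans hub⟩ ⟨hx.1, hxs⟩)
  · exact h ⟨hxs, hx.2⟩ ⟨hsu, le_rfl⟩ hx.2

end IsCumulativeMin

/-- `g` has at most `N` pieces on `[a,x]` followed by a constant piece ending at `x`. -/
def EndsFlat (g : ℝ → ℝ) (a x : ℝ) (N : ℕ) : Prop :=
  ∃ s ∈ Icc a x, PiecewiseQuadraticOn g a s N ∧ ∀ y ∈ Icc s x, g y = g s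

/-- `g` has at most `N + 1` pieces on `[a,x]`, meets `f` at `x`, and `f` has a nonpositive left
derivative there. -/
def EndsDescending (f g : ℝ → ℝ) (a x : ℝ) (N : ℕ) : Prop :=
  a < x ∧ PiecewiseQuadraticOn g a x (N + 1) ∧ g x = f x ∧
    ∃ d ≤ 0, HasDerivWithinAt f d (Iio x) x

/-- The vertex of `A * x ^ 2 + B * x + C` is a minimum attained in `[l,r)`. -/
def HasMinVertexIn (A B l r : ℝ) : Prop :=
  0 < A ∧ -B / (2 * A) ∈ Ico l r

theorem cumulativeMin_descend {f g : ℝ → ℝ} {a b l r y A B C : ℝ} {N : ℕ}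
    (hg : IsCumulativeMin f g a b) (hal : a ≤ l) (hlr : l < r) (hrb : r ≤ b)
    (hf : ∀ x ∈ Icc l r, f x = A * x ^ 2 + B * x + C) (hy : y ∈ Icc l r)
    (hpq : PiecewiseQuadraticOn g a y (N + 1)) (hgy : g y = f y) (hder : 2 * A * y + B ≤ 0) :
    EndsDescending f g a r (N + 1) ∨ HasMinVertexIn A B l r ∧ EndsFlat g a r (N + 2) := by
  have hfy : ∀ x ∈ Icc y r, f x = A * x ^ 2 + B * x + C := fun x hx => hf x ⟨hy.1.trans hx.1, hx.2⟩
  have hay : a ≤ y := hal.trans hy.1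
  have hfollow : ∀ v ∈ Icc y r, 2 * A * v + B ≤ 0 →
      PiecewiseQuadraticOn g a v (N + 2) ∧ g v = f v := by
    intro v hv hdv
    have hanti := antitoneOn_quadratic (fun x hx => hfy x ⟨hx.1, hx.2.trans hv.2⟩) hder hdv
    have heq : ∀ x ∈ Icc y v, g x = f x := fun x hx =>
      hg.eq_self_of_antitoneOn hay hx.1 (hx.2.trans (hv.2.trans hrb)) hgy
        (hanti.mono (Icc_subset_Icc_right hx.2))
    exact ⟨hpq.append hv.1 A B C fun x hx => by rw [heq x hx, hfy x ⟨hx.1, hx.2.trans hv.2⟩],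
      heq v ⟨hv.1, le_rfl⟩⟩
  rcases le_or_gt (2 * A * r + B) 0 with hdr | hdr
  · obtain ⟨h1, h2⟩ := hfollow r ⟨hy.2, le_rfl⟩ hdr
    refine .inl ⟨hal.trans_lt hlr, h1, h2, _, hdr, ?_⟩
    refine (hasDerivAt_quadratic A B C r).hasDerivWithinAt.congr_of_eventuallyEq ?_
      (hf r ⟨hlr.le, le_rfl⟩)
    filter_upwards [Ioo_mem_nhdsLT hlr] with x hx using hf x ⟨hx.1.le, hx.2.le⟩
  · right
    have hA : 0 < A := by
      by_contra! h
      nlinarith [mul_nonneg (neg_nonneg.2 h) (sub_nonneg.2 hy.2)]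
    have hyv : y ≤ -B / (2 * A) := by rw [le_div_iff₀ (by positivity)]; linarith
    have hvr : -B / (2 * A) < r := by rw [div_lt_iff₀ (by positivity)]; linarith
    have hdv : 2 * A * (-B / (2 * A)) + B = 0 := by field_simp; ring
    refine ⟨⟨hA, hy.1.trans hyv, hvr⟩, ?_⟩
    generalize -B / (2 * A) = v at hyv hvr hdv
    obtain ⟨h1, h2⟩ := hfollow v ⟨hyv, hvr.le⟩ hdv.le
    refine ⟨v, ⟨hay.trans hyv, hvr.le⟩, h1, fun x hx => ?_⟩
    refine hg.eq_of_le (hay.trans hyv) hx.1 (hx.2.trans hrb) fun z hz => ?_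
    rw [h2, hfy v ⟨hyv, hvr.le⟩, hfy z ⟨hyv.trans hz.1, hz.2.trans hx.2⟩]
    obtain rfl : B = -(2 * A * v) := by linarith
    nlinarith [mul_nonneg hA.le (sq_nonneg (z - v))]

theorem cumulativeMin_step {f g : ℝ → ℝ} {a b l r A B C : ℝ} {N : ℕ}
    (hg : IsCumulativeMin f g a b) (hal : a ≤ l) (hlr : l ≤ r) (hrb : r ≤ b)
    (hf : ∀ x ∈ Icc l r, f x = A * x ^ 2 + B * x + C)
    (hderiv : ∀ x ∈ Ioo a b, ∀ dl dr : ℝ,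
      HasDerivWithinAt f dl (Iio x) x → HasDerivWithinAt f dr (Ioi x) x → dr ≤ dl)
    (h : EndsFlat g a l N ∨ EndsDescending f g a l N) :
    (EndsFlat g a r (N + 1) ∨ EndsDescending f g a r (N + 1)) ∨
      HasMinVertexIn A B l r ∧ EndsFlat g a r (N + 2) := by
  rcases hlr.eq_or_lt with rfl | hlr
  · left
    rcases h with ⟨s, hs, hpq, hconst⟩ | ⟨hlt, hpq, hrest⟩
    · exact .inl ⟨s, hs, hpq.mono (Nat.le_succ N), hconst⟩
    · exact .inr ⟨hlt, hpq.mono (Nat.le_succ _), hrest⟩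
  rcases h with ⟨s, hs, hpq, hconst⟩ | ⟨hlt, hpq, hgl, d, hd, hdl⟩
  · by_cases hbelow : ∃ x ∈ Icc l r, f x < g s
    · have hgl : g s ≤ f l := by
        rw [← hconst l ⟨hs.2, le_rfl⟩]
        exact hg.le ⟨hal, hlr.le.trans hrb⟩ ⟨hal, le_rfl⟩
      obtain ⟨y, hy, hfy, hder, hge⟩ := exists_quadratic_descent hf hgl hbelow
      have hgy : ∀ x ∈ Icc s y, g x = g s := by
        intro x hx
        rcases le_total x l with hxl | hlx
        · exact hconst x ⟨hx.1, hxl⟩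
        · rw [← hconst l ⟨hs.2, le_rfl⟩] at hge ⊢
          exact hg.eq_of_le hal hlx (hx.2.trans (hy.2.trans hrb))
            fun z hz => hge z ⟨hz.1, hz.2.trans hx.2⟩
      have hsy : s ≤ y := hs.2.trans hy.1
      exact (cumulativeMin_descend hg hal hlr hrb hf hy (hpq.append_const hsy _ hgy)
        ((hgy y ⟨hsy, le_rfl⟩).trans hfy.symm) hder).imp_left .inr
    · push Not at hbelow
      refine .inl (.inl ⟨s, ⟨hs.1, hs.2.trans hlr.le⟩, hpq.mono (Nat.le_succ N), fun x hx => ?_⟩)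
      rcases le_total x l with hxl | hlx
      · exact hconst x ⟨hx.1, hxl⟩
      · rw [← hconst l ⟨hs.2, le_rfl⟩] at hbelow ⊢
        exact hg.eq_of_le hal hlx (hx.2.trans hrb) fun z hz => hbelow z ⟨hz.1, hz.2.trans hx.2⟩
  · have hdr : HasDerivWithinAt f (2 * A * l + B) (Ioi l) l := by
      refine (hasDerivAt_quadratic A B C l).hasDerivWithinAt.congr_of_eventuallyEq ?_
        (hf l ⟨le_rfl, hlr.le⟩)
      filter_upwards [Ioo_mem_nhdsGT hlr] with x hx using hf x ⟨hx.1.le, hx.2.le⟩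
    exact (cumulativeMin_descend hg hal hlr hrb hf ⟨le_rfl, hlr.le⟩ hpq hgl
      ((hderiv l ⟨hlt, hlr.trans_le hrb⟩ d _ hdl hdr).trans hd)).imp_left .inr

open Classical in
theorem cumulativeMin_piece_count {f g : ℝ → ℝ} {a b : ℝ} {n : ℕ}
    {t : Fin (n + 1) → ℝ} {A B C : Fin n → ℝ}
    (ht : Monotone t) (ht0 : t 0 = a) (htn : t (Fin.last n) = b)
    (hpieces : ∀ i : Fin n, ∀ x ∈ Icc (t i.castSucc) (t i.succ),
      f x = A i * x ^ 2 + B i * x + C i)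
    (hg : IsCumulativeMin f g a b)
    (hderiv : ∀ x ∈ Ioo a b, ∀ dl dr : ℝ,
      HasDerivWithinAt f dl (Iio x) x → HasDerivWithinAt f dr (Ioi x) x → dr ≤ dl)
    (k : Fin (n + 1)) :
    let N := k.val + (Finset.univ.filter fun i : Fin n =>
      i.castSucc < k ∧ HasMinVertexIn (A i) (B i) (t i.castSucc) (t i.succ)).card
    EndsFlat g a (t k) N ∨ EndsDescending f g a (t k) N := by
  induction k using Fin.induction with
  | zero =>
    subst ht0
    left
    refine ⟨t 0, ⟨le_rfl, le_rfl⟩, (PiecewiseQuadraticOn.refl g (t 0)).mono (Nat.zero_le _),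
      fun y hy => by rw [le_antisymm hy.2 hy.1]⟩
  | succ k ih =>
    have hstep := cumulativeMin_step hg (ht0 ▸ ht (Fin.zero_le _)) (ht k.castSucc_lt_succ.le)
      (htn ▸ ht (Fin.le_last _)) (hpieces k) hderiv ih
    have hsub : (Finset.univ.filter fun i : Fin n => i.castSucc < k.castSucc ∧
          HasMinVertexIn (A i) (B i) (t i.castSucc) (t i.succ)) ⊆
        Finset.univ.filter fun i : Fin n => i.castSucc < k.succ ∧
          HasMinVertexIn (A i) (B i) (t i.castSucc) (t i.succ) :=
      Finset.monotone_filter_right _ fun i _ hi => ⟨hi.1.trans k.castSucc_lt_succ, hi.2⟩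
    have hle := Finset.card_le_card hsub
    simp only [Fin.val_castSucc, Fin.val_succ] at hstep ⊢
    rcases hstep with (⟨s, hs, hpq, hconst⟩ | ⟨hlt, hpq, hrest⟩) | ⟨hv, s, hs, hpq, hconst⟩
    · exact .inl ⟨s, hs, hpq.mono (by omega), hconst⟩
    · exact .inr ⟨hlt, hpq.mono (by omega), hrest⟩
    · have hlt := Finset.card_lt_card (Finset.ssubset_iff_of_subset hsub |>.2
        ⟨k, by simpa [k.castSucc_lt_succ] using hv, by simp⟩)
      exact .inl ⟨s, hs, hpq.mono (by omega), hconst⟩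

/-- Cumulative minimum of a continuous piecewise quadratic function with `n`
pieces, whose left derivative dominates its right derivative everywhere, and
with `D` distinct leading coefficient pairs, is piecewise quadratic with at
most `n + D + 1` pieces. -/
theorem cumulative_minimum_piece_bound
    (a b : ℝ) (hab : a ≤ b) (f : ℝ → ℝ) (n D : ℕ)
    (t : Fin (n + 1) → ℝ) (A B C : Fin n → ℝ)
    (ht : Monotone t) (ht0 : t 0 = a) (htn : t (Fin.last n) = b)
    (hpieces : ∀ i : Fin n, ∀ x ∈ Set.Icc (t i.castSucc) (t i.succ),
      f x = A i * x ^ 2 + B i * x + C i)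
    (hcont : ContinuousOn f (Set.Icc a b))
    (hD : (Finset.univ.image (fun i : Fin n => (A i, B i))).card ≤ D)
    (hderiv : ∀ x ∈ Set.Ioo a b, ∀ dl dr : ℝ,
      HasDerivWithinAt f dl (Set.Iio x) x →
      HasDerivWithinAt f dr (Set.Ioi x) x → dr ≤ dl) :
    PiecewiseQuadraticOn (fun u => sInf (f '' Set.Icc a u)) a b (n + D + 1) := by
  classical
  have hcount := cumulativeMin_piece_count ht ht0 htn hpieces
    (IsCumulativeMin.of_continuousOn hcont) hderiv (Fin.last n)
  set V := Finset.univ.filter fun i : Fin n => i.castSucc < Fin.last n ∧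
    HasMinVertexIn (A i) (B i) (t i.castSucc) (t i.succ)
  have hV : V.card ≤ D := by
    have hinj : Set.InjOn (fun i : Fin n => (A i, B i)) V := by
      intro i hi j hj hij
      obtain ⟨-, -, hvi⟩ := (Finset.mem_filter.1 hi).2
      obtain ⟨-, -, hvj⟩ := (Finset.mem_filter.1 hj).2
      obtain ⟨hA, hB⟩ := Prod.mk.inj hij
      rw [hA, hB] at hvi
      rcases lt_trichotomy i j with h | h | h
      · exact absurd (hvj.1.trans_lt hvi.2) (ht (Fin.succ_le_castSucc_iff.2 h)).not_gt
      · exact h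
      · exact absurd (hvi.1.trans_lt hvj.2) (ht (Fin.succ_le_castSucc_iff.2 h)).not_gt
    rw [← Finset.card_image_of_injOn hinj]
    exact (Finset.card_le_card (Finset.image_subset_image (Finset.subset_univ V))).trans hD
  simp only [htn, Fin.val_last] at hcount
  rcases hcount with ⟨s, hs, hpq, hconst⟩ | ⟨-, hpq, -⟩
  · exact (hpq.append_const hs.2 _ hconst).mono (by omega)
  · exact hpq.mono (by omega)
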